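/- Let n ≥ 2, let μ = f·Lⁿ ∈ 𝒲(ℝⁿ) be a PS measure, let v ∈ S^{n−1}, and let E ⊆ ℝⁿ be a Lebesgue-measurable set of finite μ-perimeter. Let 𝒮(E) be the collection of all sets F ⊆ ℝⁿ of the form F = S_{η_k} ∘ ⋯ ∘ S_{η_1}(E) for some finite sequence η_1, …, η_k ∈ S^{n−1} with v·η_i > 0 for all i. Then inf_{F ∈ 𝒮(E)} μ(F Δ H_μ(E, v)) = 0. -/

import Mathlib

/-!
The distance `μ(F Δ H)` to the half-space `H = H_μ(E, v)` drops by a definite amount whenever it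
is not small, for every finite measure with a density; hence its infimum is zero.

Every symmetrization preserves `μ(F)`, so `A = F \ H` and `B = H \ F` have equal mass. Fix `η` with
`v·η > 0`. On each line of direction `η` both `H` and the symmetrized set are half-lines pointing
the same way, hence nested, and symmetrizing decreases the mass of the symmetric difference with
`H` on that line by twice the minimum of the masses of `A` and `B` (`measure_upper_symmDiff`).

To find a good `η`, restrict to a bounded set `K` on which the density is at most `N` and which
carries most of the mass (`exists_core`). Averaging over translations gives `s` for which the
overlap `∫ g(x) h(x + s) dx` of the truncated densities `g`, `h` of `A`, `B` is bounded below in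
terms of `μ(A)`, `μ(B)` and `K` only (`exists_shift`). As `A` lies below `H` and `B` inside `H`, a
nonzero overlap forces `v·s > 0`, so `η = s/‖s‖` is admissible, and on each line the overlap is at
most `N` times the minimum above (`overlap_le`). This is the uniform decrease `exists_direction`.
Applied to a set that nearly attains a positive infimum, it goes below the infimum.

Measurability is handled by passing to measurable representatives of the density and of `F`, which
changes the symmetrized set only by a null set (`symmSet_congr`).
-/

open MeasureTheory Set Filter
open scoped ENNReal RealInnerProductSpace Topology

noncomputable section

/-- Euclidean space ℝⁿ. -/
abbrev En (n : ℕ) := EuclideanSpace ℝ (Fin n)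

/-- Divergence of a vector field on ℝⁿ. -/
noncomputable def dvg {n : ℕ} (φ : En n → En n) (x : En n) : ℝ :=
  ∑ i : Fin n, fderiv ℝ φ x (EuclideanSpace.single i 1) i

/-- `f'` is the (weak) gradient of `f`, and both are locally integrable;
this encodes `f ∈ W^{1,1}_loc(ℝⁿ)` with weak gradient `∇f = f'`. -/
def HasWeakGrad {n : ℕ} (f : En n → ℝ) (f' : En n → En n) : Prop :=
  LocallyIntegrable f volume ∧ LocallyIntegrable f' volume ∧
    ∀ φ : En n → En n, ContDiff ℝ 1 φ → HasCompactSupport φ →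
      (∫ x, f x * dvg φ x) = - ∫ x, ⟪φ x, f' x⟫

/-- Membership of `μ = f·Lⁿ` in the class `𝒲(ℝⁿ)`: the density `f` is non-negative,
integrable and lies in `W^{1,1}_loc(ℝⁿ)` with weak gradient `f'`. -/
def MemW {n : ℕ} (f : En n → ℝ) (f' : En n → En n) : Prop :=
  (∀ x, 0 ≤ f x) ∧ Integrable f volume ∧ HasWeakGrad f f'

/-- Admissible test vector fields: `C¹`, compactly supported in `U`, sup-norm at most 1. -/
def IsTestField {n : ℕ} (U : Set (En n)) (φ : En n → En n) : Prop :=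
  ContDiff ℝ 1 φ ∧ HasCompactSupport φ ∧ tsupport φ ⊆ U ∧ ∀ x, ‖φ x‖ ≤ 1

/-- The weighted variation `‖g‖_{BV_μ(U)}` (valued in `ℝ≥0∞`;
membership in `BV_μ(U)` means that this quantity is finite). -/
noncomputable def bvVar {n : ℕ} (f : En n → ℝ) (f' : En n → En n) (U : Set (En n))
    (g : En n → ℝ) : ℝ≥0∞ :=
  ⨆ (φ : En n → En n) (_ : IsTestField U φ),
    ENNReal.ofReal (∫ x in U, g x * (f x * dvg φ x + ⟪φ x, f' x⟫))

/-- The weighted perimeter `Per_μ(E; U)`. -/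
noncomputable def perim {n : ℕ} (f : En n → ℝ) (f' : En n → En n) (U : Set (En n))
    (E : Set (En n)) : ℝ≥0∞ :=
  bvVar f f' U (E.indicator fun _ => (1 : ℝ))

/-- The measure `μ = f·Lⁿ`. -/
noncomputable def muM {n : ℕ} (f : En n → ℝ) : Measure (En n) :=
  volume.withDensity fun x => ENNReal.ofReal (f x)

/-- One-dimensional generalized Ehrhard symmetrization of `A ⊆ ℝ` in direction `v ∈ {−1,+1}`
with respect to a measure `ν` on `ℝ`: the largest half-line `{t : v·t ≥ c}` of `ν`-measure
`ν A` (with the conventions `∅`, `ℝ` when `c = ±∞`). -/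
def ehrhard1D (ν : Measure ℝ) (v : ℝ) (A : Set ℝ) : Set ℝ :=
  {t | ∀ b : ℝ, (∀ c : ℝ, ν {y | c ≤ v * y} ≤ ν A → b ≤ c) → b ≤ v * t}

/-- The weighted measure `f·H¹` on the fiber `{x + t·v : t ∈ ℝ}`, identified with `ℝ`. -/
noncomputable def fiberMeasure {n : ℕ} (f : En n → ℝ) (x v : En n) : Measure ℝ :=
  (volume : Measure ℝ).withDensity fun t => ENNReal.ofReal (f (x + t • v))

/-- Generalized `v`-Ehrhard symmetrization of `E ⊆ ℝⁿ` with respect to `μ = f·Lⁿ`: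
on each fiber over `v^⊥` one replaces `E` by the largest half-line in direction `v`
of the same weighted measure. -/
def ehrhardSymm {n : ℕ} (f : En n → ℝ) (v : En n) (E : Set (En n)) : Set (En n) :=
  {z | ⟪z, v⟫ ∈
      ehrhard1D (fiberMeasure f (z - ⟪z, v⟫ • v) v) 1
        {t | (z - ⟪z, v⟫ • v) + t • v ∈ E}}

/-- `μ = f·Lⁿ` is a perimeter symmetrization (PS) measure: generalized Ehrhard
symmetrization does not increase the weighted perimeter of sets of finite `μ`-perimeter. -/
def IsPSMeasure {n : ℕ} (f : En n → ℝ) (f' : En n → En n) : Prop :=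
  ∀ v : En n, ‖v‖ = 1 → ∀ E : Set (En n), NullMeasurableSet E volume →
    perim f f' univ E < ⊤ →
      perim f f' univ (ehrhardSymm f v E) ≤ perim f f' univ E

/-- The half-space `H(v, r) = {x : x·v ≥ r}`. -/
def halfSpace {n : ℕ} (v : En n) (r : ℝ) : Set (En n) := {x | r ≤ ⟪x, v⟫}

/-- `H_μ(E, v)`: the largest half-space in direction `v` with `μ`-measure `μ(E)`. -/
def halfSpaceOf {n : ℕ} (f : En n → ℝ) (E : Set (En n)) (v : En n) : Set (En n) :=
  {x | ∀ b : ℝ, (∀ c : ℝ, muM f (halfSpace v c) ≤ muM f E → b ≤ c) → b ≤ ⟪x, v⟫}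

/-- `g'` is the weak derivative of `g : ℝ → ℝ` (so `g ∈ W^{1,1}_loc(ℝ)`). -/
def HasWeakDeriv (g g' : ℝ → ℝ) : Prop :=
  LocallyIntegrable g volume ∧ LocallyIntegrable g' volume ∧
    ∀ φ : ℝ → ℝ, ContDiff ℝ 1 φ → HasCompactSupport φ →
      (∫ t, g t * deriv φ t) = - ∫ t, φ t * g' t

/-! ### Half-lines of prescribed mass -/

/-- Without atoms, `[t, ∞)` has the mass of `(t, ∞)`, the increasing union of `[c, ∞)` over
`c > t`. -/
lemma measure_Ici_le_of_forall_gt (m : Measure ℝ) [NullSingletonClass m] (a : ℝ≥0∞) (t : ℝ)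
    (h : ∀ c, t < c → m (Ici c) ≤ a) : m (Ici t) ≤ a := by
  obtain ⟨u, hu, hut, hlim⟩ := exists_seq_strictAnti_tendsto t
  have hU : (⋃ k, Ici (u k)) = Ioi t := by
    ext x
    simp only [mem_iUnion, mem_Ici, mem_Ioi]
    constructor
    · rintro ⟨k, hk⟩
      exact (hut k).trans_le hk
    · intro hx
      exact ((hlim.eventually (gt_mem_nhds hx)).exists).imp fun _ h => h.le
  have hmono : Monotone fun k => Ici (u k) := fun i j hij => Ici_subset_Ici.2 (hu.antitone hij)
  rw [← measure_congr (Ioi_ae_eq_Ici (μ := m)), ← hU, hmono.measure_iUnion]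
  exact iSup_le fun k => h _ (hut k)

/-- The condition used to define both the one-dimensional symmetrization and `halfSpaceOf`
(`t` lies above the infimum of `{c | m [c, ∞) ≤ a}`) says that `t` itself belongs to that set. -/
lemma lowerBound_iff (m : Measure ℝ) [NullSingletonClass m] (a : ℝ≥0∞) (t : ℝ) :
    (∀ b : ℝ, (∀ c : ℝ, m (Ici c) ≤ a → b ≤ c) → b ≤ t) ↔ m (Ici t) ≤ a := by
  constructor
  · intro h
    refine measure_Ici_le_of_forall_gt m a t fun c hc => ?_
    by_contra hcon
    refine absurd (h c fun c' hc' => ?_) (not_le.2 hc)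
    by_contra hlt
    exact hcon ((measure_mono (Ici_subset_Ici.2 (not_le.1 hlt).le)).trans hc')
  · intro h b hb
    exact hb t h

/-- The half-line of mass `a` does have mass `a`. If every tail has mass more than `a`, the set is
empty and `a = 0`. -/
lemma measure_upper (m : Measure ℝ) [NullSingletonClass m] [IsFiniteMeasure m] (a : ℝ≥0∞)
    (ha : a ≤ m univ) : m {t | m (Ici t) ≤ a} = a := by
  set U : Set ℝ := {t | m (Ici t) ≤ a} with hU
  have hup : ∀ t ∈ U, ∀ s, t ≤ s → s ∈ U := fun t ht s hts =>
    (measure_mono (Ici_subset_Ici.2 hts)).trans ht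
  rcases U.eq_empty_or_nonempty with h0 | hne
  · -- every tail has mass more than `a`, and the tails shrink to the empty set
    have hlim : Tendsto (fun k : ℕ => m (Ici (k : ℝ))) atTop (𝓝 (m (⋂ k : ℕ, Ici (k : ℝ)))) :=
      tendsto_measure_iInter_atTop (fun _ => measurableSet_Ici.nullMeasurableSet)
        (fun i j hij => Ici_subset_Ici.2 (by exact_mod_cast hij)) ⟨0, measure_ne_top _ _⟩
    have hI : (⋂ k : ℕ, Ici (k : ℝ)) = ∅ := by
      ext x
      obtain ⟨k, hk⟩ := exists_nat_gt x
      simp only [mem_iInter, mem_Ici, mem_empty_iff_false, iff_false, not_forall, not_le]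
      exact ⟨k, hk⟩
    rw [hI, measure_empty] at hlim
    have : a ≤ 0 := ge_of_tendsto' hlim fun k => by
      have : (k : ℝ) ∉ U := by simp [h0]
      exact (not_le.1 this).le
    rw [h0, measure_empty]
    exact (le_antisymm this bot_le).symm
  by_cases hb : BddBelow U
  · set c := sInf U with hc
    have hcU : c ∈ U := measure_Ici_le_of_forall_gt m a c fun d hd => by
      obtain ⟨e, he, hed⟩ := exists_lt_of_csInf_lt hne hd
      exact hup e he d hed.le
    have hUI : U = Ici c := by
      ext t
      exact ⟨fun ht => csInf_le hb ht, fun ht => hup c hcU t ht⟩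
    rw [hUI]
    refine le_antisymm hcU ?_
    obtain ⟨u, hu, hut, hlim⟩ := exists_seq_strictMono_tendsto c
    have hI : (⋂ k, Ici (u k)) = Ici c := by
      ext x
      simp only [mem_iInter, mem_Ici]
      exact ⟨fun h => le_of_tendsto' hlim h, fun h k => (hut k).le.trans h⟩
    have hlim2 : Tendsto (fun k : ℕ => m (Ici (u k))) atTop (𝓝 (m (⋂ k, Ici (u k)))) :=
      tendsto_measure_iInter_atTop (fun _ => measurableSet_Ici.nullMeasurableSet)
        (fun i j hij => Ici_subset_Ici.2 (hu.monotone hij)) ⟨0, measure_ne_top _ _⟩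
    rw [hI] at hlim2
    refine ge_of_tendsto' hlim2 fun k => ?_
    have : u k ∉ U := by
      rw [hUI]; simpa using hut k
    exact (not_le.1 this).le
  · have hUu : U = univ := by
      ext t
      simp only [mem_univ, iff_true]
      by_contra ht
      refine hb ⟨t, fun s hs => ?_⟩
      by_contra hst
      exact ht (hup s hs t (not_le.1 hst).le)
    rw [hUu]
    refine le_antisymm ?_ ha
    have hunion : (⋃ k : ℕ, Ici (-(k : ℝ))) = univ := by
      ext x
      obtain ⟨k, hk⟩ := exists_nat_gt (-x)
      simp only [mem_iUnion, mem_Ici, mem_univ, iff_true]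
      exact ⟨k, by linarith⟩
    have hmono : Monotone fun k : ℕ => Ici (-(k : ℝ)) := fun i j hij =>
      Ici_subset_Ici.2 (by simpa using hij)
    rw [← hunion, hmono.measure_iUnion]
    refine iSup_le fun k => ?_
    have : -(k : ℝ) ∈ U := by rw [hUu]; trivial
    exact this

/-! ### Symmetrization along lines -/

/-- The measure `ρ·H¹` on the line `{z + t η}`, parametrized by `t`; the base point `z` need not be
orthogonal to `η`. -/
def lineMeasure {n : ℕ} (ρ : En n → ℝ≥0∞) (η z : En n) : Measure ℝ :=
  (volume : Measure ℝ).withDensity fun t => ρ (z + t • η)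

/-- The trace of `E` on the line `{z + t η}`, as a set of parameters `t`. -/
def lineSection {n : ℕ} (η z : En n) (E : Set (En n)) : Set ℝ := {t | z + t • η ∈ E}

instance {n : ℕ} (ρ : En n → ℝ≥0∞) (η z : En n) : NullSingletonClass (lineMeasure ρ η z) :=
  inferInstanceAs (NullSingletonClass ((volume : Measure ℝ).withDensity _))

/-- Symmetrization of `E` in direction `η` with respect to the density `ρ`, written without base
points in `η^⊥`: the ray `z + [0, ∞) η` carries at most as much mass as the trace of `E` on the line
through `z`. -/
def symmSet {n : ℕ} (ρ : En n → ℝ≥0∞) (η : En n) (E : Set (En n)) : Set (En n) :=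
  {z | lineMeasure ρ η z (Ici 0) ≤ lineMeasure ρ η z (lineSection η z E)}

lemma lineMeasure_shift {n : ℕ} (ρ : En n → ℝ≥0∞) (η z : En n) (c : ℝ) (B : Set ℝ) :
    lineMeasure ρ η (z + c • η) ((fun t => t + c) ⁻¹' B) = lineMeasure ρ η z B := by
  unfold lineMeasure
  rw [withDensity_apply', withDensity_apply',
    ← (measurePreserving_add_right (volume : Measure ℝ) c).setLIntegral_comp_preimage_emb
      (measurableEmbedding_addRight c) _ B]
  refine lintegral_congr fun t => ?_
  congr 1
  module

lemma lineMeasure_section_shift {n : ℕ} (ρ : En n → ℝ≥0∞) (η z : En n) (c : ℝ)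
    (E : Set (En n)) :
    lineMeasure ρ η (z + c • η) (lineSection η (z + c • η) E) =
      lineMeasure ρ η z (lineSection η z E) := by
  rw [← lineMeasure_shift ρ η z c]
  congr 1
  ext t
  simp only [lineSection, mem_ofPred_eq, mem_preimage]
  rw [show z + c • η + t • η = z + (t + c) • η by module]

lemma lineSection_symmSet {n : ℕ} (ρ : En n → ℝ≥0∞) (η z : En n) (E : Set (En n)) :
    lineSection η z (symmSet ρ η E) =
      {t | lineMeasure ρ η z (Ici t) ≤ lineMeasure ρ η z (lineSection η z E)} := by
  ext t
  simp only [lineSection, symmSet, mem_ofPred_eq]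
  have h1 := lineMeasure_section_shift ρ η z t E
  have h2 := lineMeasure_shift ρ η z t (Ici t)
  have h3 : (fun s => s + t) ⁻¹' (Ici t) = Ici (0 : ℝ) := by ext s; simp
  rw [h3] at h2
  simp only [lineSection] at h1
  rw [h1, h2]

lemma ehrhardSymm_eq {n : ℕ} (f : En n → ℝ) (η : En n) (E : Set (En n)) :
    ehrhardSymm f η E = symmSet (fun x => ENNReal.ofReal (f x)) η E := by
  ext z
  set p := z - ⟪z, η⟫ • η with hp
  have hz : z = p + ⟪z, η⟫ • η := by rw [hp]; module
  have h := lowerBound_iff (lineMeasure (fun x => ENNReal.ofReal (f x)) η p)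
    (lineMeasure (fun x => ENNReal.ofReal (f x)) η p (lineSection η p E)) ⟪z, η⟫
  have h4 : z ∈ symmSet (fun x => ENNReal.ofReal (f x)) η E ↔
      ⟪z, η⟫ ∈ lineSection η p (symmSet (fun x => ENNReal.ofReal (f x)) η E) := by
    simp only [lineSection, mem_ofPred_eq, ← hz]
  rw [h4, lineSection_symmSet]
  simp only [mem_ofPred_eq]
  rw [← h]
  simp only [ehrhardSymm, ehrhard1D, mem_ofPred_eq, one_mul, ← hp]
  rfl

/-- A property holding a.e. holds, on almost every line of direction `η`, at a.e. point of it. -/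
lemma ae_line {n : ℕ} (η : En n) {P : En n → Prop} (hP : ∀ᵐ x, P x) :
    ∀ᵐ z : En n, ∀ᵐ t : ℝ, P (z + t • η) := by
  obtain ⟨N, hN, hNm, hN0⟩ := exists_measurable_superset_of_null (ae_iff.1 hP)
  have h : ∀ᵐ z : En n, ∀ᵐ t : ℝ, z + t • η ∉ N := by
    have hm : MeasurableSet {q : En n × ℝ | q.1 + q.2 • η ∉ N} :=
      hNm.compl.preimage (by fun_prop)
    rw [Measure.ae_ae_comm hm]
    refine Eventually.of_forall fun t => ?_
    have := (measurePreserving_add_right (volume : Measure (En n)) (t • η)).quasiMeasurePreserving.ae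
      (p := fun x => x ∉ N) (by rw [ae_iff]; simpa using hN0)
    exact this
  filter_upwards [h] with z hz
  filter_upwards [hz] with t ht
  by_contra hc
  exact ht (hN hc)

lemma symmSet_congr {n : ℕ} {ρ ρ' : En n → ℝ≥0∞} (η : En n) {E E' : Set (En n)}
    (hρ : ρ =ᵐ[volume] ρ') (hE : E =ᵐ[volume] E') :
    symmSet ρ η E =ᵐ[volume] symmSet ρ' η E' := by
  filter_upwards [ae_line η hρ, ae_line η hE] with z h1 h2
  have e1 : lineMeasure ρ η z = lineMeasure ρ' η z := withDensity_congr_ae h1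
  have e2 : lineMeasure ρ' η z (lineSection η z E) = lineMeasure ρ' η z (lineSection η z E') := by
    apply measure_congr
    exact (withDensity_absolutelyContinuous _ _).ae_le h2
  change (z ∈ symmSet ρ η E) = (z ∈ symmSet ρ' η E')
  simp only [symmSet, mem_ofPred_eq, e1, e2]

lemma lineMeasure_section {n : ℕ} (ρ : En n → ℝ≥0∞) (η z : En n) {E : Set (En n)}
    (hE : MeasurableSet E) :
    lineMeasure ρ η z (lineSection η z E) = ∫⁻ t : ℝ, E.indicator ρ (z + t • η) := by
  have hm : MeasurableSet (lineSection η z E) := hE.preimage (by fun_prop)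
  rw [lineMeasure, withDensity_apply', ← lintegral_indicator hm]
  rfl

lemma measurable_lint {n : ℕ} {G : En n → ℝ≥0∞} (hG : Measurable G) (η : En n) :
    Measurable fun z => ∫⁻ t : ℝ, G (z + t • η) :=
  Measurable.lintegral_prod_right' (f := fun q : En n × ℝ => G (q.1 + q.2 • η))
    (hG.comp (by fun_prop))

lemma measurableSet_symmSet {n : ℕ} {ρ : En n → ℝ≥0∞} (hρ : Measurable ρ) (η : En n)
    {E : Set (En n)} (hE : MeasurableSet E) : MeasurableSet (symmSet ρ η E) := by
  refine measurableSet_le ?_ ?_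
  · simp only [lineMeasure, withDensity_apply']
    exact Measurable.lintegral_prod_right' (f := fun q : En n × ℝ => ρ (q.1 + q.2 • η))
      (hρ.comp (by fun_prop))
  · simp only [lineMeasure_section ρ η _ hE]
    exact measurable_lint (hρ.indicator hE) η

/-! ### Fubini along lines -/

/-- The slab `0 ≤ ⟪x, η⟫ < 1`. Integration over it replaces integration over `η^⊥` in Fubini-type
formulas, so that only translation invariance of the volume is needed. -/
def slab {n : ℕ} (η : En n) : Set (En n) := {x | ⟪x, η⟫ ∈ Ico (0 : ℝ) 1}

lemma measurableSet_slab {n : ℕ} (η : En n) : MeasurableSet (slab η) :=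
  measurableSet_Ico.preimage (by fun_prop)

/-- Fubini along lines of direction `η`: every point of a line is reached from base points in the
slab for a set of parameters of length one. -/
lemma lintegral_slab {n : ℕ} {G : En n → ℝ≥0∞} (hG : Measurable G) {η : En n} (hη : ‖η‖ = 1) :
    ∫⁻ x, G x = ∫⁻ x in slab η, ∫⁻ t : ℝ, G (x + t • η) := by
  have hmS : Measurable ((slab η).indicator (1 : En n → ℝ≥0∞)) :=
    measurable_one.indicator (measurableSet_slab η)
  have hw : ∀ x : En n, ∫⁻ t : ℝ, (slab η).indicator (1 : En n → ℝ≥0∞) (x - t • η) = 1 := by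
    intro x
    have hi : ∀ t : ℝ, (slab η).indicator (1 : En n → ℝ≥0∞) (x - t • η) =
        (Ioc (⟪x, η⟫ - 1) ⟪x, η⟫).indicator 1 t := by
      intro t
      have : x - t • η ∈ slab η ↔ t ∈ Ioc (⟪x, η⟫ - 1) ⟪x, η⟫ := by
        simp only [slab, mem_ofPred_eq, inner_sub_left, inner_smul_left, real_inner_self_eq_norm_sq,
          hη, mem_Ico, mem_Ioc]
        simp
        constructor <;> rintro ⟨h1, h2⟩ <;> constructor <;> linarith
      by_cases h : x - t • η ∈ slab η
      · rw [indicator_of_mem h, indicator_of_mem (this.1 h)]; rfl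
      · rw [indicator_of_notMem h, indicator_of_notMem (fun h' => h (this.2 h'))]
    simp_rw [hi]
    rw [lintegral_indicator_one measurableSet_Ioc, Real.volume_Ioc]
    simp
  symm
  calc ∫⁻ x in slab η, ∫⁻ t : ℝ, G (x + t • η)
      = ∫⁻ x, ∫⁻ t : ℝ, (slab η).indicator 1 x * G (x + t • η) := by
        rw [← lintegral_indicator (measurableSet_slab η)]
        refine lintegral_congr fun x => ?_
        rw [lintegral_const_mul _ (by fun_prop)]
        by_cases h : x ∈ slab η <;> simp [h]
    _ = ∫⁻ t : ℝ, ∫⁻ x, (slab η).indicator 1 x * G (x + t • η) := by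
        apply lintegral_lintegral_swap
        exact ((hmS.comp measurable_fst).mul (hG.comp (g := G)
          (f := fun q : En n × ℝ => q.1 + q.2 • η) (by fun_prop))).aemeasurable
    _ = ∫⁻ t : ℝ, ∫⁻ x, (slab η).indicator 1 (x - t • η) * G x := by
        refine lintegral_congr fun t => ?_
        rw [← lintegral_add_right_eq_self (fun x => (slab η).indicator 1 (x - t • η) * G x) (t • η)]
        simp
    _ = ∫⁻ x, ∫⁻ t : ℝ, (slab η).indicator 1 (x - t • η) * G x := by
        apply lintegral_lintegral_swap
        exact ((hmS.comp (g := (slab η).indicator (1 : En n → ℝ≥0∞))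
          (f := fun q : ℝ × En n => q.2 - q.1 • η) (by fun_prop)).mul
            (hG.comp measurable_snd)).aemeasurable
    _ = ∫⁻ x, G x := by
        refine lintegral_congr fun x => ?_
        rw [lintegral_mul_const _ (by fun_prop), hw, one_mul]

lemma withDensity_slab {n : ℕ} {ρ : En n → ℝ≥0∞} (hρ : Measurable ρ) {η : En n} (hη : ‖η‖ = 1)
    {E : Set (En n)} (hE : MeasurableSet E) :
    volume.withDensity ρ E =
      ∫⁻ x in slab η, lineMeasure ρ η x (lineSection η x E) := by
  rw [withDensity_apply _ hE, ← lintegral_indicator hE, lintegral_slab (hρ.indicator hE) hη]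
  exact lintegral_congr fun x => (lineMeasure_section ρ η x hE).symm

lemma ae_lineMeasure_finite {n : ℕ} {ρ : En n → ℝ≥0∞} (hρ : Measurable ρ)
    (hfin : ∫⁻ x, ρ x ≠ ⊤) {η : En n} (hη : ‖η‖ = 1) :
    ∀ᵐ x ∂(volume.restrict (slab η)), IsFiniteMeasure (lineMeasure ρ η x) := by
  rw [lintegral_slab hρ hη] at hfin
  filter_upwards [ae_lt_top (measurable_lint hρ η) hfin] with x hx
  refine ⟨?_⟩
  rw [lineMeasure, withDensity_apply', Measure.restrict_univ]
  exact hx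

lemma withDensity_symmSet {n : ℕ} {ρ : En n → ℝ≥0∞} (hρ : Measurable ρ)
    (hfin : ∫⁻ x, ρ x ≠ ⊤) {η : En n} (hη : ‖η‖ = 1)
    {E : Set (En n)} (hE : MeasurableSet E) :
    volume.withDensity ρ (symmSet ρ η E) = volume.withDensity ρ E := by
  rw [withDensity_slab hρ hη hE, withDensity_slab hρ hη (measurableSet_symmSet hρ η hE)]
  refine lintegral_congr_ae ?_
  filter_upwards [ae_lineMeasure_finite hρ hfin hη] with x hx
  rw [lineSection_symmSet]
  exact measure_upper _ _ (measure_mono (subset_univ _))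

/-! ### Decrease of the distance to a half-space -/

lemma measure_sdiff_add_self {α : Type*} [MeasurableSpace α] (m : Measure α) {s : Set α}
    (hs : MeasurableSet s) (t : Set α) : m (t \ s) + m s = m (t ∪ s) := by
  rw [← measure_union disjoint_sdiff_left hs, sdiff_union_self]

/-- Two half-lines are nested, so `L Δ H` has mass `|m L - m H| = |m F - m H|`, which is smaller than
the mass of `F Δ H` by twice the minimum of `m (F \ H)` and `m (H \ F)`. -/
lemma measure_upper_symmDiff (m : Measure ℝ) [IsFiniteMeasure m] {L F H : Set ℝ}
    (hLm : MeasurableSet L) (hFm : MeasurableSet F) (hHm : MeasurableSet H)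
    (hL : IsUpperSet L) (hH : IsUpperSet H) (hLF : m L = m F) {c : ℝ≥0∞}
    (h1 : c ≤ m (F \ H)) (h2 : c ≤ m (H \ F)) :
    m (L \ H ∪ H \ L) + 2 * c ≤ m (F \ H ∪ H \ F) := by
  have hd : m (F \ H ∪ H \ F) = m (F \ H) + m (H \ F) :=
    measure_union (disjoint_sdiff_sdiff) (hHm.diff hFm)
  have e1 : m F + m (H \ F) = m H + m (F \ H) := by
    rw [add_comm, measure_sdiff_add_self m hFm, add_comm, measure_sdiff_add_self m hHm, union_comm]
  rw [hd, two_mul]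
  rcases hL.total hH with hLH | hHL
  · rw [sdiff_eq_empty.2 hLH, empty_union]
    have e2 : m (H \ L) + m L = m H := by
      rw [measure_sdiff_add_self m hLm, union_eq_left.2 hLH]
    have e3 : m F + m (H \ F) = m F + (m (H \ L) + m (F \ H)) := by
      rw [e1, ← e2, hLF]; ring
    rw [(ENNReal.add_right_inj (measure_ne_top _ _)).1 e3]
    calc _ ≤ m (H \ L) + (m (F \ H) + m (F \ H)) := by gcongr
      _ = _ := by ring
  · rw [sdiff_eq_empty.2 hHL, union_empty]
    have e2 : m (L \ H) + m H = m F := by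
      rw [measure_sdiff_add_self m hHm, union_eq_left.2 hHL, hLF]
    have e3 : m H + (m (L \ H) + m (H \ F)) = m H + m (F \ H) := by
      rw [← e1, ← e2]; ring
    rw [← (ENNReal.add_right_inj (measure_ne_top _ _)).1 e3]
    calc _ ≤ m (L \ H) + (m (H \ F) + m (H \ F)) := by gcongr
      _ = _ := by ring

/-- With `ρ ≤ M` on `K`, the overlap on a line of `ρ 1_{A ∩ K}` with a translate of `ρ 1_{B ∩ K}` is
at most `M` times the mass of `A`, and at most `M` times the mass of `B`. -/
lemma overlap_le {n : ℕ} {ρ : En n → ℝ≥0∞} (η z : En n)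
    {A B K : Set (En n)} (hA : MeasurableSet A) (hB : MeasurableSet B)
    {M : ℝ≥0∞} (hK : ∀ x ∈ K, ρ x ≤ M) (hM : M ≠ 0) (hM' : M ≠ ⊤) (σ : ℝ) (hρ : Measurable ρ) :
    M⁻¹ * ∫⁻ t : ℝ, (A ∩ K).indicator ρ (z + t • η) * (B ∩ K).indicator ρ (z + t • η + σ • η) ≤
      lineMeasure ρ η z (lineSection η z A) ∧
    M⁻¹ * ∫⁻ t : ℝ, (A ∩ K).indicator ρ (z + t • η) * (B ∩ K).indicator ρ (z + t • η + σ • η) ≤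
      lineMeasure ρ η z (lineSection η z B) := by
  have hb : ∀ (C : Set (En n)) x, (C ∩ K).indicator ρ x ≤ M := fun C x => by
    by_cases h : x ∈ C ∩ K
    · rw [indicator_of_mem h]; exact hK x h.2
    · rw [indicator_of_notMem h]; exact bot_le
  have hc : ∀ (C : Set (En n)) x, (C ∩ K).indicator ρ x ≤ C.indicator ρ x := fun C x =>
    indicator_le_indicator_of_subset inter_subset_left (fun _ => bot_le) x
  have hmA := hρ.indicator hA
  have hmB := hρ.indicator hB
  constructor
  · rw [ENNReal.inv_mul_le_iff hM hM', lineMeasure_section ρ η z hA,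
      ← lintegral_const_mul _ (by fun_prop)]
    refine lintegral_mono fun t => ?_
    rw [mul_comm M]
    exact mul_le_mul' (hc _ _) (hb _ _)
  · rw [ENNReal.inv_mul_le_iff hM hM', lineMeasure_section ρ η z hB,
      ← lintegral_add_right_eq_self (fun t : ℝ => B.indicator ρ (z + t • η)) σ,
      ← lintegral_const_mul _ (by fun_prop)]
    refine lintegral_mono fun t => ?_
    dsimp only
    rw [show z + (t + σ) • η = z + t • η + σ • η by module]
    exact mul_le_mul' (hb _ _) (hc _ _)

/-- Symmetrizing in direction `η` decreases the distance to `H` by at least `2 / M` times the overlap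
of the truncated densities on `F \ H` and on `H \ F` translated along `η`. -/
lemma symmSet_gain {n : ℕ} {ρ : En n → ℝ≥0∞} (hρ : Measurable ρ) (hfin : ∫⁻ x, ρ x ≠ ⊤)
    {η : En n} (hη : ‖η‖ = 1) {F H K : Set (En n)} (hF : MeasurableSet F) (hH : MeasurableSet H)
    (hKm : MeasurableSet K)
    (hup : ∀ x ∈ H, ∀ t : ℝ, 0 ≤ t → x + t • η ∈ H)
    {M : ℝ≥0∞} (hK : ∀ x ∈ K, ρ x ≤ M) (hM : M ≠ 0) (hM' : M ≠ ⊤) (σ : ℝ) :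
    volume.withDensity ρ (symmSet ρ η F \ H ∪ H \ symmSet ρ η F) +
      2 * (M⁻¹ * ∫⁻ x, ((F \ H) ∩ K).indicator ρ x * ((H \ F) ∩ K).indicator ρ (x + σ • η)) ≤
      volume.withDensity ρ (F \ H ∪ H \ F) := by
  have hS := measurableSet_symmSet hρ η hF
  have hmA : Measurable (((F \ H) ∩ K).indicator ρ) := hρ.indicator ((hF.diff hH).inter hKm)
  have hmB : Measurable (((H \ F) ∩ K).indicator ρ) := hρ.indicator ((hH.diff hF).inter hKm)
  have hmG : Measurable fun x => ((F \ H) ∩ K).indicator ρ x *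
      ((H \ F) ∩ K).indicator ρ (x + σ • η) := by fun_prop
  rw [withDensity_slab hρ hη ((hF.diff hH).union (hH.diff hF)),
    withDensity_slab hρ hη ((hS.diff hH).union (hH.diff hS)), lintegral_slab hmG hη,
    ← lintegral_const_mul _ (measurable_lint hmG η),
    ← lintegral_const_mul _ ((measurable_lint hmG η).const_mul _),
    ← lintegral_add_right _ (((measurable_lint hmG η).const_mul _).const_mul _)]
  refine lintegral_mono_ae ?_
  filter_upwards [ae_lineMeasure_finite hρ hfin hη] with x hx
  have hsec : ∀ C : Set (En n), MeasurableSet C → MeasurableSet (lineSection η x C) :=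
    fun C hC => hC.preimage (by fun_prop)
  obtain ⟨h1, h2⟩ := overlap_le η x (hF.diff hH) (hH.diff hF) hK hM hM' σ hρ
  refine measure_upper_symmDiff (lineMeasure ρ η x) (hsec _ hS) (hsec _ hF) (hsec _ hH)
    ?_ ?_ ?_ h1 h2
  · rw [lineSection_symmSet]
    intro s t hst hs
    exact (measure_mono (Ici_subset_Ici.2 hst)).trans hs
  · intro s t hst hs
    have := hup _ hs (t - s) (by linarith)
    rw [show x + s • η + (t - s) • η = x + t • η by module] at this
    exact this
  · rw [lineSection_symmSet]
    exact measure_upper _ _ (measure_mono (subset_univ _))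

/-- The overlaps `∫ g(x) h(x + s) dx` integrate in `s` to `(∫ g)(∫ h)` and vanish for `‖s‖ > 2R`,
so some `s` is at least as good as the average. -/
lemma exists_shift {n : ℕ} {g h : En n → ℝ≥0∞} (hg : Measurable g) (hh : Measurable h) {R : ℝ}
    (hgR : ∀ x, R < ‖x‖ → g x = 0) (hhR : ∀ x, R < ‖x‖ → h x = 0) {c : ℝ≥0∞}
    (hc : c * volume (Metric.closedBall (0 : En n) (2 * R)) < (∫⁻ x, g x) * ∫⁻ x, h x) :
    ∃ s, c < ∫⁻ x, g x * h (x + s) := by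
  by_contra! hcon
  refine absurd hc (not_lt.2 ?_)
  calc (∫⁻ x, g x) * ∫⁻ x, h x
      = ∫⁻ x, ∫⁻ s, g x * h (x + s) := by
        rw [← lintegral_mul_const _ hg]
        refine lintegral_congr fun x => ?_
        rw [lintegral_const_mul _ (by fun_prop), lintegral_add_left_eq_self h x]
    _ = ∫⁻ s, ∫⁻ x, g x * h (x + s) := by
        apply lintegral_lintegral_swap
        exact Measurable.aemeasurable (by fun_prop)
    _ ≤ ∫⁻ s, (Metric.closedBall (0 : En n) (2 * R)).indicator (fun _ => c) s := by
        refine lintegral_mono fun s => ?_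
        by_cases hs : s ∈ Metric.closedBall (0 : En n) (2 * R)
        · rw [indicator_of_mem hs]; exact hcon s
        · rw [indicator_of_notMem hs]
          refine (lintegral_eq_zero_of_ae_eq_zero (Eventually.of_forall fun x => ?_)).le
          rw [mem_closedBall_zero_iff, not_le] at hs
          change g x * h (x + s) = 0
          by_cases hx : R < ‖x‖
          · rw [hgR x hx, zero_mul]
          · rw [hhR (x + s), mul_zero]
            have := norm_sub_le (x + s) x
            rw [add_sub_cancel_left] at this
            linarith
    _ = c * volume (Metric.closedBall (0 : En n) (2 * R)) := by
        rw [lintegral_indicator_const measurableSet_closedBall]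

lemma measurableSet_core {n : ℕ} {ρ : En n → ℝ≥0∞} (hρ : Measurable ρ) (N : ℕ) :
    MeasurableSet {x : En n | ‖x‖ ≤ N ∧ ρ x ≤ N} := by
  have h1 : MeasurableSet {x : En n | ‖x‖ ≤ N} := measurableSet_le (by fun_prop) (by fun_prop)
  have h2 : MeasurableSet {x : En n | ρ x ≤ N} := measurableSet_le hρ (by fun_prop)
  exact h1.inter h2

/-- All but a small part of a finite measure `ρ·Lⁿ` lives on a bounded set where `ρ` is bounded. -/
lemma exists_core {n : ℕ} {ρ : En n → ℝ≥0∞} (hρ : Measurable ρ) (hfin : ∫⁻ x, ρ x ≠ ⊤)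
    (hρt : ∀ x, ρ x ≠ ⊤) {ε : ℝ≥0∞} (hε : 0 < ε) :
    ∃ N : ℕ, N ≠ 0 ∧ volume.withDensity ρ {x | ‖x‖ ≤ N ∧ ρ x ≤ N}ᶜ < ε := by
  have : IsFiniteMeasure (volume.withDensity ρ) := isFiniteMeasure_withDensity hfin
  have hm : ∀ N : ℕ, MeasurableSet {x : En n | ‖x‖ ≤ N ∧ ρ x ≤ N} := 
    measurableSet_core hρ
  have hlim : Tendsto (fun N : ℕ => volume.withDensity ρ {x : En n | ‖x‖ ≤ N ∧ ρ x ≤ N}ᶜ) atTop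
      (𝓝 (volume.withDensity ρ (⋂ N : ℕ, {x : En n | ‖x‖ ≤ N ∧ ρ x ≤ N}ᶜ))) := by
    refine tendsto_measure_iInter_atTop (fun N => (hm N).compl.nullMeasurableSet) ?_
      ⟨0, measure_ne_top _ _⟩
    intro i j hij
    refine compl_subset_compl.2 fun x hx => ⟨hx.1.trans ?_, hx.2.trans ?_⟩ <;> exact_mod_cast hij
  have hI : (⋂ N : ℕ, {x : En n | ‖x‖ ≤ N ∧ ρ x ≤ N}ᶜ) = ∅ := by
    ext x
    simp only [mem_iInter, mem_empty_iff_false, iff_false, not_forall, mem_compl_iff, not_not]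
    obtain ⟨a, ha⟩ := exists_nat_ge ‖x‖
    obtain ⟨b, hb⟩ := ENNReal.exists_nat_gt (hρt x)
    refine ⟨max a b, ha.trans ?_, hb.le.trans ?_⟩
    · exact_mod_cast le_max_left a b
    · exact_mod_cast le_max_right a b
  rw [hI, measure_empty] at hlim
  obtain ⟨N, hN, hN0⟩ := ((hlim.eventually (gt_mem_nhds hε)).and (eventually_ne_atTop 0)).exists
  exact ⟨N, hN0, hN⟩

/-- Uniform decrease: as long as `F` is at distance at least `δ` from `H`, some admissible direction
reduces the distance by `κ`, which depends on `δ` and `ρ` but not on `F`. -/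
lemma exists_direction {n : ℕ} {ρ : En n → ℝ≥0∞} (hρ : Measurable ρ) (hfin : ∫⁻ x, ρ x ≠ ⊤)
    (hρt : ∀ x, ρ x ≠ ⊤) {v : En n} {H : Set (En n)} (hH : MeasurableSet H)
    (hup : ∀ x ∈ H, ∀ y, ⟪x, v⟫ ≤ ⟪y, v⟫ → y ∈ H) {δ : ℝ≥0∞} (hδ : 0 < δ) (hδt : δ ≠ ⊤) :
    ∃ κ : ℝ≥0∞, 0 < κ ∧ ∀ F : Set (En n), MeasurableSet F →
      volume.withDensity ρ F = volume.withDensity ρ H →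
      δ ≤ volume.withDensity ρ (F \ H ∪ H \ F) →
      ∃ η : En n, ‖η‖ = 1 ∧ 0 < ⟪v, η⟫ ∧
        volume.withDensity ρ (symmSet ρ η F \ H ∪ H \ symmSet ρ η F) + κ ≤
          volume.withDensity ρ (F \ H ∪ H \ F) := by
  have : IsFiniteMeasure (volume.withDensity ρ) := isFiniteMeasure_withDensity hfin
  set μ := volume.withDensity ρ with hμ
  have hδ4 : δ / 4 ≠ 0 := (ENNReal.div_pos hδ.ne' (by norm_num)).ne'
  obtain ⟨N, hN0, hN⟩ := exists_core hρ hfin hρt (pos_iff_ne_zero.2 hδ4)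
  set K : Set (En n) := {x | ‖x‖ ≤ N ∧ ρ x ≤ N} with hKdef
  have hKm : MeasurableSet K := measurableSet_core hρ N
  set V := volume (Metric.closedBall (0 : En n) (2 * (N : ℝ))) with hV
  have hVt : V ≠ ⊤ := measure_closedBall_lt_top.ne
  obtain ⟨c, hc0, hc⟩ : ∃ c : ℝ≥0∞, 0 < c ∧ c * V < δ / 4 * (δ / 4) := by
    have hpos : 0 < δ / 4 * (δ / 4) := pos_iff_ne_zero.2 (mul_ne_zero hδ4 hδ4)
    have hlim : Tendsto (fun c : ℝ≥0∞ => c * V) (𝓝[>] 0) (𝓝 (0 * V)) :=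
      (ENNReal.Tendsto.mul_const tendsto_id (Or.inr hVt)).mono_left nhdsWithin_le_nhds
    rw [zero_mul] at hlim
    obtain ⟨c, h1, h2⟩ := ((hlim.eventually (gt_mem_nhds hpos)).and self_mem_nhdsWithin).exists
    exact ⟨c, h2, h1⟩
  have hNe : (N : ℝ≥0∞) ≠ 0 := by exact_mod_cast hN0
  have hNt : (N : ℝ≥0∞) ≠ ⊤ := ENNReal.natCast_ne_top N
  refine ⟨2 * ((N : ℝ≥0∞)⁻¹ * c), ?_, fun F hF hFH hFδ => ?_⟩
  · refine pos_iff_ne_zero.2 (mul_ne_zero (by norm_num) (mul_ne_zero ?_ hc0.ne'))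
    exact ENNReal.inv_ne_zero.2 hNt
  have hd : μ (F \ H ∪ H \ F) = μ (F \ H) + μ (H \ F) :=
    measure_union disjoint_sdiff_sdiff (hH.diff hF)
  have he : μ (F \ H) = μ (H \ F) := by
    have e1 : μ F + μ (H \ F) = μ H + μ (F \ H) := by
      rw [add_comm, measure_sdiff_add_self μ hF, add_comm, measure_sdiff_add_self μ hH, union_comm]
    rw [hFH] at e1
    exact ((ENNReal.add_right_inj (measure_ne_top _ _)).1 e1).symm
  have hhalf : δ / 2 ≤ μ (F \ H) := by
    rw [hd, ← he, ← two_mul] at hFδ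
    exact ENNReal.div_le_of_le_mul' hFδ
  have hcore : ∀ C : Set (En n), MeasurableSet C → δ / 2 ≤ μ C →
      δ / 4 ≤ ∫⁻ x, (C ∩ K).indicator ρ x := by
    intro C hC h
    rw [lintegral_indicator (hC.inter hKm), ← withDensity_apply _ (hC.inter hKm), ← hμ]
    have h2 : δ / 4 + δ / 4 ≤ μ (C ∩ K) + δ / 4 := by
      calc δ / 4 + δ / 4 = δ / 2 := by
            rw [← ENNReal.add_div, ← two_mul, show (4 : ℝ≥0∞) = 2 * 2 by norm_num,
              ENNReal.mul_div_mul_left _ _ (by norm_num) (by norm_num)]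
        _ ≤ μ C := h
        _ ≤ μ (C ∩ K) + μ (C \ K) := measure_le_inter_add_sdiff _ _ _
        _ ≤ μ (C ∩ K) + δ / 4 := by
            gcongr
            exact (measure_mono fun x hx => hx.2).trans hN.le
    exact (ENNReal.add_le_add_iff_right (ENNReal.div_ne_top hδt (by norm_num))).1 h2
  have hmA : Measurable (((F \ H) ∩ K).indicator ρ) := hρ.indicator ((hF.diff hH).inter hKm)
  have hmB : Measurable (((H \ F) ∩ K).indicator ρ) := hρ.indicator ((hH.diff hF).inter hKm)
  have hzero : ∀ (C : Set (En n)) x, (N : ℝ) < ‖x‖ → (C ∩ K).indicator ρ x = 0 := fun C x hx =>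
    indicator_of_notMem (fun h => absurd h.2.1 (not_le.2 hx)) _
  obtain ⟨s, hs⟩ := exists_shift hmA hmB (hzero _) (hzero _) (c := c)
    (hc.trans_le (mul_le_mul' (hcore _ (hF.diff hH) hhalf) (hcore _ (hH.diff hF) (he ▸ hhalf))))
  -- a nonzero overlap yields `x ∉ H` with `x + s ∈ H`, hence `s` points upwards
  obtain ⟨x, hx⟩ : ∃ x, ((F \ H) ∩ K).indicator ρ x * ((H \ F) ∩ K).indicator ρ (x + s) ≠ 0 := by
    by_contra! hcon
    simp [hcon] at hs
  have hxA : x ∈ (F \ H) ∩ K := by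
    by_contra h
    exact hx (by rw [indicator_of_notMem h, zero_mul])
  have hxB : x + s ∈ (H \ F) ∩ K := by
    by_contra h
    exact hx (by rw [indicator_of_notMem h, mul_zero])
  have hvs : 0 < ⟪v, s⟫ := by
    by_contra hcon
    refine hxA.1.2 (hup _ hxB.1.1 x ?_)
    rw [inner_add_left, real_inner_comm v s]
    linarith
  have hs0 : s ≠ 0 := by
    rintro rfl
    simp at hvs
  have hsn : 0 < ‖s‖ := norm_pos_iff.2 hs0
  have hse : ‖s‖ • (‖s‖⁻¹ • s) = s := by
    rw [smul_smul, mul_inv_cancel₀ hsn.ne', one_smul]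
  have hvη : 0 < ⟪v, ‖s‖⁻¹ • s⟫ := by
    rw [inner_smul_right]
    positivity
  have hη1 : ‖‖s‖⁻¹ • s‖ = 1 := by
    rw [norm_smul, norm_inv, norm_norm, inv_mul_cancel₀ hsn.ne']
  refine ⟨‖s‖⁻¹ • s, hη1, hvη, ?_⟩
  have hgain := symmSet_gain hρ hfin hη1 hF hH hKm
    (fun x hx t ht => hup x hx _ (by
      rw [inner_add_left, inner_smul_left, real_inner_comm]
      simp only [conj_trivial]
      have := mul_nonneg ht hvη.le
      rw [real_inner_comm] at this
      rw [real_inner_comm]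
      linarith)) (fun x hx => hx.2) hNe hNt ‖s‖
  rw [hse] at hgain
  refine le_trans ?_ hgain
  gcongr

/-! ### The target half-space -/

lemma hyperplane_null {n : ℕ} {v : En n} (hv : ‖v‖ = 1) (c : ℝ) :
    volume {x : En n | ⟪x, v⟫ = c} = 0 := by
  have hm : MeasurableSet {x : En n | ⟪x, v⟫ = c} :=
    measurableSet_eq_fun (by fun_prop) (by fun_prop)
  have h := withDensity_slab (ρ := fun _ : En n => 1) measurable_const hv hm
  rw [show (fun _ : En n => (1 : ℝ≥0∞)) = 1 from rfl, withDensity_one] at h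
  rw [h]
  refine lintegral_eq_zero_of_ae_eq_zero (Eventually.of_forall fun x => ?_)
  have : lineSection v x {x : En n | ⟪x, v⟫ = c} = {c - ⟪x, v⟫} := by
    ext t
    simp only [lineSection, mem_ofPred_eq, inner_add_left, inner_smul_left,
      real_inner_self_eq_norm_sq, hv, mem_singleton_iff, conj_trivial]
    constructor <;> intro h <;> linarith
  change lineMeasure 1 v x _ = 0
  rw [this, measure_singleton]

lemma halfSpaceOf_spec {n : ℕ} (f : En n → ℝ) (hf : Integrable f) {v : En n} (hv : ‖v‖ = 1)
    (E : Set (En n)) :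
    MeasurableSet (halfSpaceOf f E v) ∧ muM f (halfSpaceOf f E v) = muM f E := by
  have hfin : IsFiniteMeasure (muM f) :=
    isFiniteMeasure_withDensity_ofReal hf.2
  have hmi : Measurable fun x : En n => ⟪x, v⟫ := by fun_prop
  set m := (muM f).map fun x : En n => ⟪x, v⟫ with hm
  have hIci : ∀ c, muM f (halfSpace v c) = m (Ici c) := fun c => by
    rw [hm, Measure.map_apply hmi measurableSet_Ici]; rfl
  have : NullSingletonClass m := ⟨fun c => by
    rw [hm, Measure.map_apply hmi (measurableSet_singleton c)]
    exact withDensity_absolutelyContinuous _ _ (hyperplane_null hv c)⟩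
  have hH : halfSpaceOf f E v = (fun x : En n => ⟪x, v⟫) ⁻¹' {t | m (Ici t) ≤ muM f E} := by
    ext x
    simp only [halfSpaceOf, hIci]
    exact lowerBound_iff m (muM f E) ⟪x, v⟫
  have hUm : MeasurableSet {t | m (Ici t) ≤ muM f E} := by
    refine IsUpperSet.ordConnected (fun s t hst hs => ?_) |>.measurableSet
    exact (measure_mono (Ici_subset_Ici.2 hst)).trans hs
  refine ⟨hH ▸ hUm.preimage hmi, ?_⟩
  rw [hH, ← Measure.map_apply hmi hUm, ← hm]
  refine measure_upper m _ ?_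
  rw [hm, Measure.map_apply hmi MeasurableSet.univ]
  exact measure_mono (subset_univ _)

/-- **Filling all the holes.** For a PS measure and a set `E` of finite `μ`-perimeter,
iterated Ehrhard symmetrizations in directions making positive angle with `v` bring `E`
arbitrarily close (in `μ`-symmetric-difference) to the half-space `H_μ(E, v)`. -/
theorem filling_all_the_holes {n : ℕ} (hn : 2 ≤ n) (f : En n → ℝ) (f' : En n → En n)
    (hW : MemW f f') (hPS : IsPSMeasure f f')
    (v : En n) (hv : ‖v‖ = 1)
    (E : Set (En n)) (hE : NullMeasurableSet E volume)
    (hfin : perim f f' univ E < ⊤) :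
    (⨅ (F : Set (En n)) (_ : ∃ l : List (En n), l ≠ [] ∧
        (∀ η ∈ l, ‖η‖ = 1 ∧ (0:ℝ) < ⟪v, η⟫) ∧
        F = l.foldl (fun A η => ehrhardSymm f η A) E),
      muM f ((F \ halfSpaceOf f E v) ∪ (halfSpaceOf f E v \ F))) = 0 := by
  have hf : Integrable f := hW.2.1
  obtain ⟨g, hg, hfg⟩ : ∃ g : En n → ℝ, Measurable g ∧ f =ᵐ[volume] g :=
    ⟨_, hf.1.aemeasurable.measurable_mk, hf.1.aemeasurable.ae_eq_mk⟩
  set ρ : En n → ℝ≥0∞ := fun x => ENNReal.ofReal (g x) with hρdef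
  have hρ : Measurable ρ := hg.ennreal_ofReal
  have hfρ : (fun x => ENNReal.ofReal (f x)) =ᵐ[volume] ρ := by
    filter_upwards [hfg] with x hx
    simp only [hρdef, hx]
  have hμ : muM f = volume.withDensity ρ := withDensity_congr_ae hfρ
  have hμfin : IsFiniteMeasure (muM f) := isFiniteMeasure_withDensity_ofReal hf.2
  have hfinρ : ∫⁻ x, ρ x ≠ ⊤ := by
    have h := measure_ne_top (muM f) univ
    rwa [hμ, withDensity_apply _ MeasurableSet.univ, Measure.restrict_univ] at h
  have hac : muM f ≪ volume := withDensity_absolutelyContinuous _ _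
  obtain ⟨hHm, hHE⟩ := halfSpaceOf_spec f hf hv E
  set H := halfSpaceOf f E v with hH
  have hup : ∀ x ∈ H, ∀ y, ⟪x, v⟫ ≤ ⟪y, v⟫ → y ∈ H :=
    fun x hx y hxy b hb => (hx b hb).trans hxy
  -- one symmetrization agrees a.e. with the symmetrization of measurable representatives
  have hstep : ∀ (F F₀ : Set (En n)) (η : En n), F =ᵐ[volume] F₀ →
      ehrhardSymm f η F =ᵐ[volume] symmSet ρ η F₀ := fun F F₀ η h => by
    rw [ehrhardSymm_eq]
    exact symmSet_congr η hfρ h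
  have hinv : ∀ l : List (En n), (∀ η ∈ l, ‖η‖ = 1 ∧ (0 : ℝ) < ⟪v, η⟫) → ∀ F : Set (En n),
      NullMeasurableSet F volume →
      NullMeasurableSet (l.foldl (fun A η => ehrhardSymm f η A) F) volume ∧
      muM f (l.foldl (fun A η => ehrhardSymm f η A) F) = muM f F := by
    intro l
    induction l with
    | nil => exact fun _ F hF => ⟨hF, rfl⟩
    | cons η l ih =>
      intro hl F hF
      obtain ⟨F₀, hF₀, hFF₀⟩ := hF
      have hs := hstep F F₀ η hFF₀
      obtain ⟨h1, h2⟩ := ih (fun η' h' => hl η' (List.mem_cons_of_mem _ h')) (ehrhardSymm f η F)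
        ⟨_, measurableSet_symmSet hρ η hF₀, hs⟩
      refine ⟨h1, h2.trans ?_⟩
      rw [measure_congr (hac.ae_eq hs), measure_congr (hac.ae_eq hFF₀), hμ]
      exact withDensity_symmSet hρ hfinρ (hl η List.mem_cons_self).1 hF₀
  have hdiff : ∀ F F₀ : Set (En n), F =ᵐ[volume] F₀ →
      muM f (F \ H ∪ H \ F) = volume.withDensity ρ (F₀ \ H ∪ H \ F₀) := fun F F₀ h => by
    rw [← hμ]
    have h' := hac.ae_eq h
    exact measure_congr ((h'.diff (ae_eq_refl _)).union ((ae_eq_refl _).diff h'))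
  by_contra hne
  set δ := ⨅ (F : Set (En n)) (_ : ∃ l : List (En n), l ≠ [] ∧
        (∀ η ∈ l, ‖η‖ = 1 ∧ (0:ℝ) < ⟪v, η⟫) ∧
        F = l.foldl (fun A η => ehrhardSymm f η A) E),
      muM f ((F \ H) ∪ (H \ F)) with hδ
  have hδle : ∀ l : List (En n), l ≠ [] → (∀ η ∈ l, ‖η‖ = 1 ∧ (0:ℝ) < ⟪v, η⟫) →
      δ ≤ muM f ((l.foldl (fun A η => ehrhardSymm f η A) E \ H) ∪
        (H \ l.foldl (fun A η => ehrhardSymm f η A) E)) :=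
    fun l h1 h2 => iInf₂_le _ ⟨l, h1, h2, rfl⟩
  have hδt : δ ≠ ⊤ := by
    refine ne_top_of_le_ne_top (measure_ne_top (muM f) _) (hδle [v] (by simp) ?_)
    intro η hη
    rw [List.mem_singleton.1 hη, real_inner_self_eq_norm_sq, hv]
    norm_num
  obtain ⟨κ, hκ, hdir⟩ := exists_direction hρ hfinρ (fun x => ENNReal.ofReal_ne_top) hHm hup
    (pos_iff_ne_zero.2 hne) hδt
  -- an almost optimal set can be improved beyond the infimum
  have hlt : δ < δ + κ := ENNReal.lt_add_right hδt hκ.ne'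
  obtain ⟨F, hF⟩ := iInf_lt_iff.1 (hδ ▸ hlt)
  obtain ⟨⟨l, hl0, hl, rfl⟩, hFlt⟩ := iInf_lt_iff.1 hF
  obtain ⟨⟨F₀, hF₀, hFF₀⟩, hFE⟩ := hinv l hl E hE
  have hle := hδle l hl0 hl
  rw [hdiff _ _ hFF₀] at hle hFlt
  obtain ⟨η, hη, hvη, hgain⟩ := hdir F₀ hF₀
    (by rw [← hμ, hHE, ← hFE, measure_congr (hac.ae_eq hFF₀)]) hle
  have hnew := hδle (l ++ [η]) (by simp) (by
    intro η' h'
    rcases List.mem_append.1 h' with h' | h'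
    · exact hl η' h'
    · rw [List.mem_singleton.1 h']; exact ⟨hη, hvη⟩)
  rw [List.foldl_append, List.foldl_cons, List.foldl_nil, hdiff _ _ (hstep _ _ η hFF₀)] at hnew
  exact absurd (((add_le_add_left hnew κ).trans hgain).trans_lt hFlt) (lt_irrefl _)

end
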